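/- arXiv:2307.14365 — 2 statements merged into one kernel-verified Lean document; each statement's English description precedes it below -/
import Mathlib

section
/- Let f be analytic on the open unit disk 𝔻 with f(0)=0 and f'(0)=1, with Taylor coefficients a_n = f^{(n)}(0)/n!. Suppose F is analytic on a ball B(0,r) with r > 0, F(0)=0, and f(F(w)) = w for all |w| < r, and suppose g is analytic on a ball B(0,r') with r' > 0, g(0)=0, and F(w) = w·exp(g(w)) for 0 < |w| < r'. Define Γ_n = (1/2)·g^{(n)}(0)/n!. Then Γ₁Γ₃ − Γ₂² = (1/48)(13a₂⁴ − 12a₂²a₃ − 12a₃² + 12a₂a₄). -/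
open Metric

lemma aux_hasDeriv {f : ℂ → ℂ} {z : ℂ} (hf : AnalyticAt ℂ f z) (k : ℕ) :
    ∀ᶠ w in nhds z, HasDerivAt (iteratedDeriv k f) (iteratedDeriv (k+1) f w) w := by
  filter_upwards [hf.eventually_analyticAt] with w hw
  rw [iteratedDeriv_succ]
  have h : AnalyticAt ℂ (iteratedDeriv k f) w := by
    rw [iteratedDeriv_eq_iterate]
    exact hw.iterated_deriv k
  exact h.differentiableAt.hasDerivAt

lemma aux_diff {A B A' B' : ℂ → ℂ} {z : ℂ} (h : ∀ᶠ w in nhds z, A w = B w)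
    (hA : ∀ᶠ w in nhds z, HasDerivAt A (A' w) w)
    (hB : ∀ᶠ w in nhds z, HasDerivAt B (B' w) w) :
    ∀ᶠ w in nhds z, A' w = B' w := by
  filter_upwards [h.eventually_nhds, hA, hB] with w hw h1 h2
  exact h1.unique (h2.congr_of_eventuallyEq hw)

/-- The second Hankel determinant of logarithmic coefficients of the inverse:
`Γ₁Γ₃ − Γ₂² = (1/48)(13a₂⁴ − 12a₂²a₃ − 12a₃² + 12a₂a₄)`. -/
theorem hankel_log_inverse_formula
    (f F g : ℂ → ℂ) (r r' : ℝ) (a Γ : ℕ → ℂ)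
    (hf : AnalyticOnNhd ℂ f (ball (0 : ℂ) 1))
    (hf0 : f 0 = 0) (hf1 : deriv f 0 = 1)
    (ha : ∀ n, a n = iteratedDeriv n f 0 / (n.factorial : ℂ))
    (hr : 0 < r) (hF : AnalyticOnNhd ℂ F (ball (0 : ℂ) r)) (hF0 : F 0 = 0)
    (hinv : ∀ w ∈ ball (0 : ℂ) r, f (F w) = w)
    (hr' : 0 < r') (hg : AnalyticOnNhd ℂ g (ball (0 : ℂ) r')) (hg0 : g 0 = 0)
    (hFg : ∀ w ∈ ball (0 : ℂ) r', w ≠ 0 → F w = w * Complex.exp (g w))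
    (hΓ : ∀ n, Γ n = (1 / 2 : ℂ) * iteratedDeriv n g 0 / (n.factorial : ℂ)) :
    Γ 1 * Γ 3 - Γ 2 ^ 2
      = (1 / 48 : ℂ) * (13 * a 2 ^ 4 - 12 * a 2 ^ 2 * a 3 - 12 * a 3 ^ 2
        + 12 * a 2 * a 4) := by
  have hfa : AnalyticAt ℂ f 0 := hf 0 (by simp)
  have hFa : AnalyticAt ℂ F 0 := hF 0 (by simp [hr])
  have hga : AnalyticAt ℂ g 0 := hg 0 (by simp [hr'])
  have hT : Filter.Tendsto F (nhds 0) (nhds 0) := by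
    have := hFa.continuousAt.tendsto
    rwa [hF0] at this
  have dF := aux_hasDeriv hFa
  have dg := aux_hasDeriv hga
  have dfF : ∀ k, ∀ᶠ w in nhds (0:ℂ), HasDerivAt (fun w => iteratedDeriv k f (F w))
      (iteratedDeriv (k+1) f (F w) * iteratedDeriv 1 F w) w := by
    intro k
    filter_upwards [hT.eventually (aux_hasDeriv hfa k), dF 0] with w h1 h2
    rw [iteratedDeriv_zero] at h2
    exact h1.comp w h2
  have df0 := dfF 0
  have dF0 := dF 0
  have dg0 := dg 0
  simp only [iteratedDeriv_zero, zero_add] at df0 dF0 dg0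
  have dE : ∀ᶠ w in nhds (0:ℂ), HasDerivAt (fun w => Complex.exp (g w))
      (Complex.exp (g w) * iteratedDeriv 1 g w) w := by
    filter_upwards [dg0] with w h
    exact h.cexp
  have e0 : ∀ᶠ w in nhds (0:ℂ), f (F w) = w := by
    filter_upwards [ball_mem_nhds (0:ℂ) hr] with w hw using hinv w hw
  have k0 : ∀ᶠ w in nhds (0:ℂ), F w = w * Complex.exp (g w) := by
    filter_upwards [ball_mem_nhds (0:ℂ) hr'] with w hw
    by_cases h : w = 0
    · simp [h, hF0]
    · exact hFg w hw h
  have e1 : ∀ᶠ w in nhds (0:ℂ), iteratedDeriv 1 f (F w)*iteratedDeriv 1 F w = 1 := by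
    refine aux_diff e0 ?_ ?_
    · filter_upwards [df0] with w df0
      have := df0
      refine (this.congr_deriv ?_)
      try simp
      try ring
    · refine Filter.Eventually.of_forall fun w => ?_
      have := (hasDerivAt_id' w)
      refine (this.congr_deriv ?_)
      try simp
      try ring
  have e2 : ∀ᶠ w in nhds (0:ℂ), iteratedDeriv 2 f (F w)*iteratedDeriv 1 F w^2+iteratedDeriv 1 f (F w)*iteratedDeriv 2 F w = 0 := by
    refine aux_diff e1 ?_ ?_
    · filter_upwards [dF 1, dfF 1] with w dF1 df1
      have := (df1.mul dF1)
      refine (this.congr_deriv ?_)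
      try simp
      try ring
    · refine Filter.Eventually.of_forall fun w => ?_
      have := (hasDerivAt_const w (1:ℂ))
      refine (this.congr_deriv ?_)
      try simp
      try ring
  have e3 : ∀ᶠ w in nhds (0:ℂ), iteratedDeriv 3 f (F w)*iteratedDeriv 1 F w^3+3*iteratedDeriv 2 f (F w)*iteratedDeriv 1 F w*iteratedDeriv 2 F w+iteratedDeriv 1 f (F w)*iteratedDeriv 3 F w = 0 := by
    refine aux_diff e2 ?_ ?_
    · filter_upwards [dF 1, dF 2, dfF 1, dfF 2] with w dF1 dF2 df1 df2
      have := ((df2.mul ((dF1).pow 2)).add (df1.mul dF2))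
      refine (this.congr_deriv ?_)
      try simp
      try ring
    · refine Filter.Eventually.of_forall fun w => ?_
      have := (hasDerivAt_const w (0:ℂ))
      refine (this.congr_deriv ?_)
      try simp
      try ring
  have e4 : ∀ᶠ w in nhds (0:ℂ), iteratedDeriv 4 f (F w)*iteratedDeriv 1 F w^4+6*iteratedDeriv 3 f (F w)*iteratedDeriv 1 F w^2*iteratedDeriv 2 F w+3*iteratedDeriv 2 f (F w)*iteratedDeriv 2 F w^2+4*iteratedDeriv 2 f (F w)*iteratedDeriv 1 F w*iteratedDeriv 3 F w+iteratedDeriv 1 f (F w)*iteratedDeriv 4 F w = 0 := by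
    refine aux_diff e3 ?_ ?_
    · filter_upwards [dF 1, dF 2, dF 3, dfF 1, dfF 2, dfF 3] with w dF1 dF2 dF3 df1 df2 df3
      have := (((df3.mul ((dF1).pow 3)).add ((((hasDerivAt_const w (3:ℂ)).mul df2).mul dF1).mul dF2)).add (df1.mul dF3))
      refine (this.congr_deriv ?_)
      try simp
      try ring
    · refine Filter.Eventually.of_forall fun w => ?_
      have := (hasDerivAt_const w (0:ℂ))
      refine (this.congr_deriv ?_)
      try simp
      try ring
  have k1 : ∀ᶠ w in nhds (0:ℂ), iteratedDeriv 1 F w = Complex.exp (g w)+F w*iteratedDeriv 1 g w := by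
    refine aux_diff k0 ?_ ?_
    · filter_upwards [dF0] with w dG
      have := dG
      refine (this.congr_deriv ?_)
      try simp
      try ring
    · filter_upwards [dE, k0] with w dE hk
      have := ((hasDerivAt_id' w).mul dE)
      refine (this.congr_deriv ?_)
      rw [hk]
      ring
  have k2 : ∀ᶠ w in nhds (0:ℂ), iteratedDeriv 2 F w = Complex.exp (g w)*iteratedDeriv 1 g w+iteratedDeriv 1 F w*iteratedDeriv 1 g w+F w*iteratedDeriv 2 g w := by
    refine aux_diff k1 ?_ ?_
    · filter_upwards [dF 1] with w dF1
      have := dF1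
      refine (this.congr_deriv ?_)
      try simp
      try ring
    · filter_upwards [dE, dF0, dg 1] with w dE dG dg1
      have := (dE.add (dG.mul dg1))
      refine (this.congr_deriv ?_)
      try simp
      try ring
  have k3 : ∀ᶠ w in nhds (0:ℂ), iteratedDeriv 3 F w = Complex.exp (g w)*iteratedDeriv 1 g w^2+Complex.exp (g w)*iteratedDeriv 2 g w+iteratedDeriv 2 F w*iteratedDeriv 1 g w+2*iteratedDeriv 1 F w*iteratedDeriv 2 g w+F w*iteratedDeriv 3 g w := by
    refine aux_diff k2 ?_ ?_
    · filter_upwards [dF 2] with w dF2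
      have := dF2
      refine (this.congr_deriv ?_)
      try simp
      try ring
    · filter_upwards [dE, dF 1, dF0, dg 1, dg 2] with w dE dF1 dG dg1 dg2
      have := (((dE.mul dg1).add (dF1.mul dg1)).add (dG.mul dg2))
      refine (this.congr_deriv ?_)
      try simp
      try ring
  have k4 : ∀ᶠ w in nhds (0:ℂ), iteratedDeriv 4 F w = Complex.exp (g w)*iteratedDeriv 1 g w^3+3*Complex.exp (g w)*iteratedDeriv 1 g w*iteratedDeriv 2 g w+Complex.exp (g w)*iteratedDeriv 3 g w+iteratedDeriv 3 F w*iteratedDeriv 1 g w+3*iteratedDeriv 2 F w*iteratedDeriv 2 g w+3*iteratedDeriv 1 F w*iteratedDeriv 3 g w+F w*iteratedDeriv 4 g w := by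
    refine aux_diff k3 ?_ ?_
    · filter_upwards [dF 3] with w dF3
      have := dF3
      refine (this.congr_deriv ?_)
      try simp
      try ring
    · filter_upwards [dE, dF 1, dF 2, dF0, dg 1, dg 2, dg 3] with w dE dF1 dF2 dG dg1 dg2 dg3
      have := (((((dE.mul ((dg1).pow 2)).add (dE.mul dg2)).add (dF2.mul dg1)).add (((hasDerivAt_const w (2:ℂ)).mul dF1).mul dg2)).add (dG.mul dg3))
      refine (this.congr_deriv ?_)
      try simp
      try ring
  replace e1 := e1.self_of_nhds
  replace e2 := e2.self_of_nhds
  replace e3 := e3.self_of_nhds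
  replace e4 := e4.self_of_nhds
  replace k1 := k1.self_of_nhds
  replace k2 := k2.self_of_nhds
  replace k3 := k3.self_of_nhds
  replace k4 := k4.self_of_nhds
  have hf1' : iteratedDeriv 1 f 0 = 1 := by rw [iteratedDeriv_one, hf1]
  simp only [hF0, hg0, hf1', Complex.exp_zero, zero_mul, add_zero, one_mul] at e1 e2 e3 e4 k1 k2 k3 k4
  simp only [hΓ, ha, Nat.factorial]
  generalize iteratedDeriv 1 F 0 = F1 at *
  generalize iteratedDeriv 2 F 0 = F2 at *
  generalize iteratedDeriv 3 F 0 = F3 at *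
  generalize iteratedDeriv 4 F 0 = F4 at *
  generalize iteratedDeriv 1 g 0 = g1 at *
  generalize iteratedDeriv 2 g 0 = g2 at *
  generalize iteratedDeriv 3 g 0 = g3 at *
  generalize iteratedDeriv 2 f 0 = f2 at *
  generalize iteratedDeriv 3 f 0 = f3 at *
  generalize iteratedDeriv 4 f 0 = f4 at *
  subst k1
  have h2 : f2 = -F2 := by linear_combination e2
  subst h2
  have h3 : f3 = 3*F2^2-F3 := by linear_combination e3
  subst h3
  have h4 : f4 = -(6*(3*F2^2-F3)*F2-3*F2^3-4*F2*F3+F4) := by linear_combination e4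
  subst h4
  subst k2
  subst k3
  subst k4
  push_cast
  ring
end

section
/- Let f be analytic on the open unit disk 𝔻 with f(0)=0 and f'(0)=1, with Taylor coefficients a_n = f^{(n)}(0)/n!, and let p be analytic on 𝔻 with p(0)=1, with Taylor coefficients c_n = p^{(n)}(0)/n!. If 2·z·f''(z) = f'(z)·(p(z) − 1) for all z ∈ 𝔻, then (1/48)(13a₂⁴ − 12a₂²a₃ − 12a₃² + 12a₂a₄) = (1/36864)(11c₁⁴ − 40c₁²c₂ − 64c₂² + 96c₁c₃). -/
open Metric

theorem deriv_eq_on_ball_aux {u v u' v' : ℂ → ℂ}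
    (h : ∀ z ∈ ball (0 : ℂ) 1, u z = v z)
    (hu : ∀ z ∈ ball (0 : ℂ) 1, HasDerivAt u (u' z) z)
    (hv : ∀ z ∈ ball (0 : ℂ) 1, HasDerivAt v (v' z) z) :
    ∀ z ∈ ball (0 : ℂ) 1, u' z = v' z := by
  intro z hz
  have e : u =ᶠ[nhds z] v := by
    filter_upwards [isOpen_ball.mem_nhds hz] with w hw using h w hw
  exact (hu z hz).unique ((hv z hz).congr_of_eventuallyEq e)

/-- For `f ∈ 𝒜` with `2 z f''(z) = f'(z)(p(z) − 1)`, the Hankel determinant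
expression in terms of the Carathéodory coefficients:
`(1/48)(13a₂⁴ − 12a₂²a₃ − 12a₃² + 12a₂a₄)
  = (1/36864)(11c₁⁴ − 40c₁²c₂ − 64c₂² + 96c₁c₃)`. -/
theorem convex_hankel_caratheodory_formula
    (f p : ℂ → ℂ) (a c : ℕ → ℂ)
    (hf : AnalyticOnNhd ℂ f (ball (0 : ℂ) 1))
    (hf0 : f 0 = 0) (hf1 : deriv f 0 = 1)
    (ha : ∀ n, a n = iteratedDeriv n f 0 / (n.factorial : ℂ))
    (hp : AnalyticOnNhd ℂ p (ball (0 : ℂ) 1)) (hp0 : p 0 = 1)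
    (hc : ∀ n, c n = iteratedDeriv n p 0 / (n.factorial : ℂ))
    (hrel : ∀ z ∈ ball (0 : ℂ) 1,
      2 * z * deriv (deriv f) z = deriv f z * (p z - 1)) :
    (1 / 48 : ℂ) * (13 * a 2 ^ 4 - 12 * a 2 ^ 2 * a 3 - 12 * a 3 ^ 2
        + 12 * a 2 * a 4)
      = (1 / 36864 : ℂ) * (11 * c 1 ^ 4 - 40 * c 1 ^ 2 * c 2 - 64 * c 2 ^ 2
        + 96 * c 1 * c 3) := by
  have hd : ∀ {g : ℂ → ℂ}, AnalyticOnNhd ℂ g (ball (0 : ℂ) 1) →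
      ∀ z ∈ ball (0 : ℂ) 1, HasDerivAt g (deriv g z) z :=
    fun hg z hz => (hg z hz).differentiableAt.hasDerivAt
  have f1 := hf.deriv
  have f2 := f1.deriv
  have f3 := f2.deriv
  have f4 := f3.deriv
  have p1 := hp.deriv
  have p2 := p1.deriv
  have r1 := deriv_eq_on_ball_aux hrel
    (fun z hz => ((hasDerivAt_id z).const_mul 2).mul (hd f2 z hz))
    (fun z hz => (hd f1 z hz).mul ((hd hp z hz).sub_const 1))
  have r2 := deriv_eq_on_ball_aux r1
    (fun z hz => ((hd f2 z hz).const_mul (2 * 1)).add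
      (((hasDerivAt_id z).const_mul 2).mul (hd f3 z hz)))
    (fun z hz => ((hd f2 z hz).mul ((hd hp z hz).sub_const 1)).add
      ((hd f1 z hz).mul (hd p1 z hz)))
  have r3 := deriv_eq_on_ball_aux r2
    (fun z hz => ((hd f3 z hz).const_mul (2 * 1)).add
      (((hd f3 z hz).const_mul (2 * 1)).add
      (((hasDerivAt_id z).const_mul 2).mul (hd f4 z hz))))
    (fun z hz => (((hd f3 z hz).mul ((hd hp z hz).sub_const 1)).add
      ((hd f2 z hz).mul (hd p1 z hz))).add
      (((hd f2 z hz).mul (hd p1 z hz)).add ((hd f1 z hz).mul (hd p2 z hz))))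
  have h0 : (0 : ℂ) ∈ ball (0 : ℂ) 1 := by simp
  have e1 := r1 0 h0
  have e2 := r2 0 h0
  have e3 := r3 0 h0
  simp only [hf1, hp0, id, mul_zero, zero_mul, sub_self, mul_one, one_mul, add_zero,
    zero_add] at e1 e2 e3
  simp only [ha, hc, iteratedDeriv_succ, iteratedDeriv_zero, Nat.factorial]
  generalize deriv (deriv f) 0 = A at *
  generalize deriv (deriv (deriv f)) 0 = B at *
  generalize deriv (deriv (deriv (deriv f))) 0 = C at *
  generalize deriv p 0 = P at *
  generalize deriv (deriv p) 0 = Q at *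
  generalize deriv (deriv (deriv p)) 0 = R at *
  have hP : P = 2 * A := by linear_combination -e1
  subst hP
  have hQ : Q = 4 * B - 4 * A ^ 2 := by linear_combination -e2
  subst hQ
  have hR : R = 6 * C - 6 * A * B - 3 * A * (4 * B - 4 * A ^ 2) := by
    linear_combination -e3
  subst hR
  push_cast
  ring
end
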